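/- Let 𝔅 be a homothecy invariant basis of nonempty bounded open convex subsets of ℝⁿ, and let μ, ν be locally finite nonnegative Borel measures on ℝⁿ, with μ nonzero and doubling with respect to 𝔅. Then the following are equivalent: (i) there exist γ ∈ (0,1) and c > 0 such that ν({x ∈ ℝⁿ : M_{𝔅,μ}(1_E)(x) > γ}) ≤ c·ν(E) for every Borel set E ⊆ ℝⁿ; (ii) there exists p₀ > 1 such that M_{𝔅,μ} is bounded on L^p(ν) for every p > p₀. -/

import Mathlib

open MeasureTheory Set Filter
open scoped ENNReal Topology Pointwise

noncomputable section

/-- The maximal operator `M_{𝔅,μ}` associated to a measure `μ` and a collection `𝔅`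
of subsets of `ℝⁿ`, applied to `f` at the point `x` (valued in `ℝ≥0∞`; it equals `0`
outside the union of `𝔅`). -/
noncomputable def maxOp {n : ℕ} (μ : Measure (EuclideanSpace ℝ (Fin n)))
    (𝔅 : Set (Set (EuclideanSpace ℝ (Fin n))))
    (f : EuclideanSpace ℝ (Fin n) → ℝ) (x : EuclideanSpace ℝ (Fin n)) : ℝ≥0∞ :=
  ⨆ (B : Set (EuclideanSpace ℝ (Fin n))) (_ : B ∈ 𝔅) (_ : x ∈ B) (_ : 0 < μ B),
    (∫⁻ y in B, ENNReal.ofReal |f y| ∂μ) / μ B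

/-- A collection of sets is homothecy invariant if it is closed under translations and
positive dilations. -/
def HomothecyInvariant {n : ℕ} (𝔅 : Set (Set (EuclideanSpace ℝ (Fin n)))) : Prop :=
  ∀ B ∈ 𝔅, (∀ y : EuclideanSpace ℝ (Fin n), y +ᵥ B ∈ 𝔅) ∧ (∀ s : ℝ, 0 < s → s • B ∈ 𝔅)

/-- `μ` is doubling with respect to the collection `𝔅`, with constant `Δ`: whenever
`B ∈ 𝔅` and a translate of the dilate `2·B` contains `B`, its measure is at most
`Δ·μ(B)`. -/
def DoublingWrt {n : ℕ} (μ : Measure (EuclideanSpace ℝ (Fin n)))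
    (𝔅 : Set (Set (EuclideanSpace ℝ (Fin n)))) (Δ : ℝ) : Prop :=
  ∀ B ∈ 𝔅, ∀ σ : EuclideanSpace ℝ (Fin n),
    B ⊆ σ +ᵥ (2 : ℝ) • B → μ (σ +ᵥ (2 : ℝ) • B) ≤ ENNReal.ofReal Δ * μ B

/-- A member of a basis of convex sets: nonempty, bounded, open and convex. -/
def IsConvexBasisSet {n : ℕ} (B : Set (EuclideanSpace ℝ (Fin n))) : Prop :=
  B.Nonempty ∧ Bornology.IsBounded B ∧ IsOpen B ∧ Convex ℝ B

/-- An open axis-parallel rectangle in `ℝⁿ`. -/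
def IsAxisRect {n : ℕ} (R : Set (EuclideanSpace ℝ (Fin n))) : Prop :=
  ∃ a b : Fin n → ℝ, (∀ i, a i < b i) ∧ R = {x | ∀ i, x i ∈ Set.Ioo (a i) (b i)}

/-- An open rectangle (possibly rotated rectangular parallelepiped) in `ℝⁿ`:
the image of an open axis-parallel rectangle under a rigid motion. -/
def IsRect {n : ℕ} (R : Set (EuclideanSpace ℝ (Fin n))) : Prop :=
  ∃ (f : EuclideanSpace ℝ (Fin n) ≃ᵢ EuclideanSpace ℝ (Fin n))
    (S : Set (EuclideanSpace ℝ (Fin n))), IsAxisRect S ∧ R = f '' S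

/-- An open axis-parallel cube in `ℝⁿ`. -/
def IsAxisCube {n : ℕ} (C : Set (EuclideanSpace ℝ (Fin n))) : Prop :=
  ∃ (a : Fin n → ℝ) (s : ℝ), 0 < s ∧ C = {x | ∀ i, x i ∈ Set.Ioo (a i) (a i + s)}

/-- `M_{𝔅,μ}` is bounded on `L^p(ν)`. -/
def BoundedOnLp {n : ℕ} (μ ν : Measure (EuclideanSpace ℝ (Fin n)))
    (𝔅 : Set (Set (EuclideanSpace ℝ (Fin n)))) (p : ℝ) : Prop :=
  ∃ C : ℝ≥0∞, C ≠ ⊤ ∧ ∀ f : EuclideanSpace ℝ (Fin n) → ℝ, Measurable f →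
    ∫⁻ x, maxOp μ 𝔅 f x ^ p ∂ν ≤ C * ∫⁻ x, ENNReal.ofReal |f x| ^ p ∂ν

/-- The Tauberian condition for `M_{𝔅,μ}` at level `γ`, with constant `c`, with respect
to the measure `ν`. -/
def TauberianCond {n : ℕ} (μ ν : Measure (EuclideanSpace ℝ (Fin n)))
    (𝔅 : Set (Set (EuclideanSpace ℝ (Fin n)))) (γ c : ℝ) : Prop :=
  ∀ E : Set (EuclideanSpace ℝ (Fin n)), MeasurableSet E →
    ν {x | ENNReal.ofReal γ < maxOp μ 𝔅 (E.indicator 1) x} ≤ ENNReal.ofReal c * ν E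

/-- The standard open dyadic box of scale `2^k` and position `m` in `ℝⁿ`. -/
def stdBox (n : ℕ) (k : ℤ) (m : Fin n → ℤ) : Set (Fin n → ℝ) :=
  {x | ∀ i, (m i : ℝ) * 2 ^ k < x i ∧ x i < ((m i : ℝ) + 1) * 2 ^ k}

/-- A parametrization of a rectangular grid: a rigid motion composed with a positive
diagonal scaling. The image of the standard unit box under such a map is a rectangle. -/
def IsRectParam {n : ℕ} (T : (Fin n → ℝ) → EuclideanSpace ℝ (Fin n)) : Prop :=
  ∃ (f : EuclideanSpace ℝ (Fin n) ≃ᵢ EuclideanSpace ℝ (Fin n)) (l : Fin n → ℝ),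
    (∀ i, 0 < l i) ∧
    ∀ x, T x = f ((WithLp.equiv 2 (Fin n → ℝ)).symm (fun i => l i * x i))

/-- The dyadic mesh generated by a rectangle parametrized by `T`. -/
def dyadicMesh {n : ℕ} (T : (Fin n → ℝ) → EuclideanSpace ℝ (Fin n)) :
    Set (Set (EuclideanSpace ℝ (Fin n))) :=
  {S | ∃ (k : ℤ) (m : Fin n → ℤ), S = T '' stdBox n k m}

/-- `S` is a dyadic descendant of the rectangle `R`, `s` generations inside `R`. -/
def DyadicDescendant {n : ℕ} (R S : Set (EuclideanSpace ℝ (Fin n))) (s : ℕ) : Prop :=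
  ∃ T : (Fin n → ℝ) → EuclideanSpace ℝ (Fin n), IsRectParam T ∧
    T '' stdBox n 0 0 = R ∧
    ∃ m : Fin n → ℤ, (∀ i, 0 ≤ m i ∧ m i < 2 ^ s) ∧ S = T '' stdBox n (-(s : ℤ)) m

/-- The family of all homothetic copies (translates and positive dilates) of `R₀`. -/
def homCopies {n : ℕ} (R₀ : Set (EuclideanSpace ℝ (Fin n))) :
    Set (Set (EuclideanSpace ℝ (Fin n))) :=
  {S | ∃ (y : EuclideanSpace ℝ (Fin n)) (s : ℝ), 0 < s ∧ S = y +ᵥ s • R₀}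

/-- Iterated halo sets `H_β^k(E)`: `H_β^0(E) = E` and
`H_β^{k+1}(E) = {x : M_{𝔊,μ}(1_{H_β^k(E)})(x) ≥ β}`. -/
def Hiter {n : ℕ} (μ : Measure (EuclideanSpace ℝ (Fin n)))
    (𝔊 : Set (Set (EuclideanSpace ℝ (Fin n)))) (β : ℝ)
    (E : Set (EuclideanSpace ℝ (Fin n))) : ℕ → Set (EuclideanSpace ℝ (Fin n))
  | 0 => E
  | k + 1 => {x | ENNReal.ofReal β ≤ maxOp μ 𝔊 ((Hiter μ 𝔊 β E k).indicator 1) x}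

/-- The Muckenhoupt `A_{p,𝔅}` condition for a weight `w` (with respect to Lebesgue
measure); here `1 - p/(p-1) = 1 - p'`. -/
def MuckenhouptAp {n : ℕ} (𝔅 : Set (Set (EuclideanSpace ℝ (Fin n))))
    (w : EuclideanSpace ℝ (Fin n) → ℝ) (p : ℝ) : Prop :=
  ∃ C : ℝ≥0∞, C ≠ ⊤ ∧ ∀ B ∈ 𝔅,
    ((∫⁻ x in B, ENNReal.ofReal (w x) ∂volume) / volume B) *
      (((∫⁻ x in B, ENNReal.ofReal (w x) ^ (1 - p / (p - 1)) ∂volume) / volume B) ^ (p - 1))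
      ≤ C

/-- `𝔅` is a Muckenhoupt basis: for every `1 < p < ∞` and every weight `w ∈ A_{p,𝔅}`,
the maximal operator `M_𝔅` is bounded on `L^p(w)`. -/
def MuckenhouptBasis {n : ℕ} (𝔅 : Set (Set (EuclideanSpace ℝ (Fin n)))) : Prop :=
  ∀ p : ℝ, 1 < p → ∀ w : EuclideanSpace ℝ (Fin n) → ℝ, (∀ x, 0 ≤ w x) →
    LocallyIntegrable w volume → MuckenhouptAp 𝔅 w p →
    BoundedOnLp volume (volume.withDensity fun x => ENNReal.ofReal (w x)) 𝔅 p

end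

/-!
From (i) to (ii), the heart of the matter is that the level of the Tauberian condition can be
lowered. By Minkowski and Helly, a bounded open convex set `B` has a point `c` such that every
`x ∈ B` satisfies `(n + 1) c ∈ x + n closure B`. Dilating around `c`, the doubling condition
yields a Vitali covering lemma for the homothetic copies of `B` about its points, with constant
`Δ ^ (n + 2)`, and therefore a density theorem: about almost every point of `E ∩ B`, the set `E`
has density close to `1` in arbitrarily small copies of `B`.

Fix `γ < γ' < 1`. If `E` has density at most `γ'` in `B`, the density is continuous in the scale,
so almost every point of `E ∩ B` has a copy of `B` in which it is exactly `γ'`. These copies lie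
in `B` and in the halo `{M 1_E > γ}`, and disjointly chosen ones contain a fixed proportion of new
mass, so the halo has at least `q` times the mass of `E` in `B`, for a fixed `q > 1`. After `m`
iterations any set `B` with `μ(E ∩ B) > q ^ (-m) μ(B)` is engulfed by the iterated halo, whose `ν`
measure is at most `c ^ (m + 1) ν(E)`. Hence `ν {M 1_E > 4 ^ (-i)} ≤ A D ^ i ν(E)`: a restricted
weak type estimate with polynomial dependence on the level, which summation over dyadic shells
turns into boundedness on `L^p(ν)` as soon as `2 ^ p > D`.

From (ii) to (i), apply Chebyshev's inequality to `M 1_E`.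
-/

section ConvexGeometry

open AffineMap Module

variable {V : Type*} [NormedAddCommGroup V] [NormedSpace ℝ V] {B : Set V}

lemma sum_mem_card_smul_of_convex {ι : Type*} (hB : Convex ℝ B) (hne : B.Nonempty)
    (s : Finset ι) {f : ι → V} (hf : ∀ i ∈ s, f i ∈ B) : ∑ i ∈ s, f i ∈ (s.card : ℝ) • B := by
  classical
  induction s using Finset.induction_on with
  | empty => simp [zero_smul_set hne]
  | insert a s ha ih =>
    rw [Finset.sum_insert ha, Finset.card_insert_of_notMem ha, Nat.cast_succ, add_comm _ (1 : ℝ),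
      hB.add_smul zero_le_one s.card.cast_nonneg, one_smul]
    exact add_mem_add (hf a (Finset.mem_insert_self a s))
      (ih fun i hi => hf i (Finset.mem_insert_of_mem hi))

/-- Since `-u = n • y - (n + 1) • c` for some `y ∈ closure B`, the right-hand side is a combination
of `v`, `w`, `y`, `c` with nonnegative weights adding up to `K`. -/
lemma exists_mem_smul_eq_of_center {n ρ K : ℝ} {c u v w : V} (hB : Convex ℝ B) (hBo : IsOpen B)
    (hn : 0 ≤ n) (hc : ∀ x ∈ B, ∃ y ∈ closure B, (n + 1) • c = x + n • y) (hcB : c ∈ B)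
    (hρ : 0 ≤ ρ) (hK : ρ * (n + 1) < K - 1) (hu : u ∈ B) (hv : v ∈ B)
    (hw : w ∈ closure B) : ∃ q ∈ B, K • q = (K - 1) • c + v + ρ • (w - u) := by
  obtain ⟨y, hy, hyu⟩ := hc u hu
  have hρn : 0 ≤ ρ * (n + 1) := by positivity
  have hK0 : 0 < K := by linarith
  obtain ⟨w₁, hw₁, hw₁'⟩ :=
    hB.closure.exists_mem_add_smul_eq hw hy hρ (mul_nonneg hρ hn)
  obtain ⟨w₂, hw₂, hw₂'⟩ := hB.closure.exists_mem_add_smul_eq hw₁ (subset_closure hcB)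
    (add_nonneg hρ (mul_nonneg hρ hn)) (q := K - 1 - ρ * (n + 1)) (by linarith)
  have hmem := hB.combo_interior_closure_mem_interior (hBo.interior_eq.symm ▸ hv) hw₂
    (a := K⁻¹) (b := K⁻¹ * (K - 1)) (by positivity)
    (mul_nonneg (by positivity) (by linarith)) (by field_simp; ring)
  refine ⟨_, interior_subset hmem, ?_⟩
  have hKw₂ : (K - 1) • w₂ = ρ • w + (ρ * n) • y + (K - 1 - ρ * (n + 1)) • c := by
    rw [← hw₁', ← hw₂']
    congr 1
    ring
  rw [smul_add, smul_inv_smul₀ hK0.ne', mul_smul, smul_inv_smul₀ hK0.ne', hKw₂,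
    eq_sub_of_add_eq hyu.symm]
  module

lemma homothety_image_eq_preimage (x : V) {t : ℝ} (ht : t ≠ 0) (B : Set V) :
    homothety x t '' B = homothety x t⁻¹ ⁻¹' B :=
  congrFun (image_eq_preimage_of_inverse
    (fun y => by rw [← homothety_mul_apply, inv_mul_cancel₀ ht, homothety_one, id_apply])
    (fun y => by rw [← homothety_mul_apply, mul_inv_cancel₀ ht, homothety_one, id_apply])) B

lemma homothety_image_subset (hB : Convex ℝ B) (hBo : IsOpen B) {x : V} (hx : x ∈ closure B)
    {t : ℝ} (ht : t ∈ Ioc (0 : ℝ) 1) : homothety x t '' B ⊆ B := by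
  rintro _ ⟨y, hy, rfl⟩
  rw [homothety_eq_lineMap, lineMap_apply_module]
  rw [← hBo.interior_eq] at hy ⊢
  exact hB.combo_closure_interior_mem_interior hx hy (by linarith [ht.2]) ht.1 (by ring)

lemma eventually_homothety_image_subset (hBb : Bornology.IsBounded B) {U : Set V} {x : V}
    (hU : U ∈ 𝓝 x) : ∀ᶠ t in 𝓝 (0 : ℝ), homothety x t '' B ⊆ U := by
  obtain ⟨ε, hε, hεU⟩ := Metric.mem_nhds_iff.1 hU
  obtain ⟨R, hR⟩ := hBb.subset_closedBall x
  have hlim : Tendsto (fun t : ℝ => ‖t‖ * R) (𝓝 0) (𝓝 0) := by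
    simpa using (continuous_norm.tendsto (0 : ℝ)).mul_const R
  filter_upwards [hlim.eventually_lt_const hε] with t ht
  rintro _ ⟨y, hy, rfl⟩
  refine hεU (Metric.mem_ball.2 ?_)
  rw [dist_homothety_center]
  exact (mul_le_mul_of_nonneg_left (Metric.mem_closedBall'.1 (hR hy)) (norm_nonneg t)).trans_lt ht

lemma eventually_mem_homothety_image_iff {x y : V} {s : ℝ} (hs : s ≠ 0)
    (hy : y ∉ frontier (homothety x s '' B)) :
    ∀ᶠ t in 𝓝 s, (y ∈ homothety x t '' B ↔ y ∈ homothety x s '' B) := by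
  rw [homothety_image_eq_preimage x hs, ← (homothety_isOpenMap x _
    (inv_ne_zero hs)).preimage_frontier_eq_frontier_preimage (homothety_continuous x _)] at hy
  have hlim : Tendsto (fun t : ℝ => homothety x t⁻¹ y) (𝓝 s) (𝓝 (homothety x s⁻¹ y)) := by
    simp only [homothety_apply]
    exact ((tendsto_inv₀ hs).smul_const _).add_const _
  have hiff : ∀ᶠ t in 𝓝 s, (homothety x t⁻¹ y ∈ B ↔ homothety x s⁻¹ y ∈ B) := by
    by_cases hyB : homothety x s⁻¹ y ∈ closure B
    · have hyint : homothety x s⁻¹ y ∈ interior B := by_contra fun h => hy ⟨hyB, h⟩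
      filter_upwards [hlim.eventually_mem (isOpen_interior.mem_nhds hyint)] with t ht
      exact iff_of_true (interior_subset ht) (interior_subset hyint)
    · filter_upwards [hlim.eventually_mem (isClosed_closure.isOpen_compl.mem_nhds hyB)] with t ht
      exact iff_of_false (fun h => ht (subset_closure h)) fun h => hyB (subset_closure h)
  filter_upwards [eventually_ne_nhds hs, hiff] with t ht hyt
  rwa [homothety_image_eq_preimage x ht, homothety_image_eq_preimage x hs]

variable [FiniteDimensional ℝ V]

/-- Minkowski's bound on the asymmetry of a convex body; the sets `x + n • closure B` have a common
point by Helly's theorem, any `n + 1` of them containing the sum of the corresponding points. -/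
lemma exists_center_mem_of_convex (hB : Convex ℝ B) (hBo : IsOpen B) (hBb : Bornology.IsBounded B)
    (hne : B.Nonempty) :
    ∃ c ∈ B, ∀ x ∈ B, ∃ y ∈ closure B,
      ((finrank ℝ V : ℝ) + 1) • c = x + (finrank ℝ V : ℝ) • y := by
  classical
  set n := finrank ℝ V
  have hn : (n : ℝ) + 1 ≠ 0 := by positivity
  have hinter : (⋂ x : B, (x : V) +ᵥ (n : ℝ) • closure B).Nonempty := by
    refine Convex.helly_theorem_compact' (𝕜 := ℝ) (fun x => (hB.closure.smul _).vadd _)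
      (fun x => (hBb.isCompact_closure.smul _).vadd _) fun I hI => ?_
    obtain ⟨b, hb⟩ := hne
    have hI' : (0 : ℝ) ≤ n + 1 - I.card := sub_nonneg.2 (by exact_mod_cast hI)
    refine ⟨∑ i ∈ I, (i : V) + ((n : ℝ) + 1 - I.card) • b, mem_iInter₂.2 fun j hj => ?_⟩
    have hrest := Set.add_mem_add
      (sum_mem_card_smul_of_convex hB ⟨b, hb⟩ (I.erase j) fun i _ => i.2)
      (smul_mem_smul_set (a := (n : ℝ) + 1 - I.card) hb)
    rw [← hB.add_smul (Nat.cast_nonneg _) hI', Finset.cast_card_erase_of_mem hj,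
      show (I.card - 1 + (n + 1 - I.card) : ℝ) = n by ring] at hrest
    rw [← Finset.add_sum_erase I _ hj, add_assoc]
    exact mem_vadd_set.2 ⟨_, smul_set_mono subset_closure hrest, rfl⟩
  obtain ⟨z, hz⟩ := hinter
  have hcenter : ∀ x ∈ B, ∃ y ∈ closure B, z = x + (n : ℝ) • y := fun x hx => by
    obtain ⟨_, ⟨y, hy, rfl⟩, hyz⟩ :=
      mem_vadd_set.1 (mem_iInter.1 hz ⟨x, hx⟩ : z ∈ x +ᵥ (n : ℝ) • closure B)
    exact ⟨y, hy, hyz.symm⟩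
  refine ⟨((n : ℝ) + 1)⁻¹ • z, ?_, fun x hx => by rw [smul_inv_smul₀ hn]; exact hcenter x hx⟩
  obtain ⟨x, hx⟩ := hne
  obtain ⟨y, hy, rfl⟩ := hcenter x hx
  rw [← hBo.interior_eq] at hx ⊢
  rw [smul_add, smul_smul]
  exact hB.combo_interior_closure_mem_interior hx hy (by positivity) (by positivity)
    (by field_simp; ring)

lemma closure_homothety_image (hBb : Bornology.IsBounded B) (x : V) (t : ℝ) :
    closure (homothety x t '' B) = homothety x t '' closure B :=
  (image_closure_of_isCompact hBb.isCompact_closure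
    (homothety_continuous x t).continuousOn).symm

lemma exists_closure_homothety_subset (hB : Convex ℝ B) (hBo : IsOpen B)
    (hBb : Bornology.IsBounded B) (hne : B.Nonempty) :
    ∃ c ∈ B, ∀ (x y : V) (r s K : ℝ), 0 < r → 0 < s → r ≤ 2 * s →
      2 * (finrank ℝ V : ℝ) + 3 < K → (homothety x r '' B ∩ homothety y s '' B).Nonempty →
      closure (homothety x r '' B) ⊆
        homothety (homothety y s c) K '' (homothety y s '' B) := by
  obtain ⟨c, hcB, hc⟩ := exists_center_mem_of_convex hB hBo hBb hne
  refine ⟨c, hcB, ?_⟩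
  rintro x y r s K hr hs hrs hK ⟨_, ⟨u, hu, rfl⟩, ⟨v, hv, hvu⟩⟩
  rw [closure_homothety_image hBb]
  rintro _ ⟨w, hw, rfl⟩
  have hρ : r / s ≤ 2 := (div_le_iff₀ hs).2 hrs
  have hn : (0 : ℝ) ≤ finrank ℝ V := Nat.cast_nonneg _
  obtain ⟨q, hq, hqK⟩ := exists_mem_smul_eq_of_center hB hBo hn hc hcB (by positivity)
    (show r / s * ((finrank ℝ V : ℝ) + 1) < K - 1 by nlinarith) hu hv hw
  refine ⟨_, mem_image_of_mem _ hq, ?_⟩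
  simp only [homothety_apply, vsub_eq_sub, vadd_eq_add] at hvu ⊢
  have hsq : s • K • q = s • ((K - 1) • c + v) + r • (w - u) := by
    rw [hqK, smul_add _ _ ((r / s) • _), smul_smul s, mul_div_cancel₀ _ hs.ne']
  calc K • (s • (q - y) + y - (s • (c - y) + y)) + (s • (c - y) + y)
      = s • K • q - s • K • c + (s • (c - y) + y) := by module
    _ = s • (v - y) + y + r • (w - u) := by rw [hsq]; module
    _ = r • (w - x) + x := by rw [hvu]; module

end ConvexGeometry

/-- The dyadic layer `{2 ^ l < g ≤ 2 ^ (l + 1)}` of a function `g`. The half-open intervals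
`(2 ^ l, 2 ^ (l + 1)]` partition `(0, ∞)`, so the shells miss only the points where `g` is `0`
or `∞`. -/
def dyadicShell {α : Type*} (g : α → ℝ≥0∞) (l : ℤ) : Set α :=
  g ⁻¹' Ioc (2 ^ l) (2 ^ (l + 1))

section DyadicLayers

variable {α : Type*} {g : α → ℝ≥0∞} {p : ℝ}

lemma exists_mem_dyadicShell {x : α} (h0 : g x ≠ 0) (htop : g x ≠ ∞) :
    ∃ l, x ∈ dyadicShell g l :=
  ENNReal.exists_mem_Ioc_zpow h0 htop ENNReal.one_lt_two ENNReal.ofNat_ne_top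

lemma pairwise_disjoint_dyadicShell (g : α → ℝ≥0∞) :
    Pairwise (Function.onFun Disjoint (dyadicShell g)) := fun _ _ h =>
  ((ENNReal.monotone_zpow ENNReal.one_lt_two.le).pairwise_disjoint_on_Ioc_succ h).preimage g

lemma rpow_le_tsum_indicator_Ioi_two_zpow (hp : 0 < p) (y : ℝ≥0∞) :
    y ^ p ≤ ∑' j : ℤ, (Ioi ((2 : ℝ≥0∞) ^ j)).indicator (fun _ => (2 ^ (j + 1)) ^ p) y := by
  rcases eq_or_ne y 0 with rfl | h0
  · simp [ENNReal.zero_rpow_of_pos hp]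
  rcases eq_or_ne y ∞ with rfl | htop
  · have hterm : ∀ j : ℕ, 1 ≤ (Ioi ((2 : ℝ≥0∞) ^ (j : ℤ))).indicator
        (fun _ => ((2 : ℝ≥0∞) ^ ((j : ℤ) + 1)) ^ p) ∞ := fun j => by
      rw [indicator_of_mem (mem_Ioi.2 (ENNReal.zpow_lt_top two_ne_zero ENNReal.ofNat_ne_top _))]
      exact ENNReal.one_le_rpow
        (by exact_mod_cast one_le_pow₀ (n := j + 1) ENNReal.one_lt_two.le) hp
    calc (∞ : ℝ≥0∞) ^ p ≤ ∑' _ : ℕ, (1 : ℝ≥0∞) := by simp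
      _ ≤ _ := ENNReal.tsum_le_tsum hterm
      _ ≤ _ := ENNReal.tsum_comp_le_tsum_of_injective Nat.cast_injective _
  obtain ⟨l, hl, hl'⟩ :=
    ENNReal.exists_mem_Ioc_zpow h0 htop ENNReal.one_lt_two ENNReal.ofNat_ne_top
  refine le_trans ?_ (ENNReal.le_tsum l)
  rw [indicator_of_mem (mem_Ioi.2 hl)]
  gcongr

lemma le_add_tsum_indicator_dyadicShell (j : ℤ) {x : α} (hx : g x ≠ ∞) :
    g x ≤ 2 ^ j + ∑' i : ℕ, (dyadicShell g (j + i)).indicator (fun _ => 2 ^ (j + i + 1)) x := by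
  rcases le_or_gt (g x) (2 ^ j) with hsmall | hlarge
  · exact hsmall.trans le_self_add
  obtain ⟨l, hl⟩ := exists_mem_dyadicShell hlarge.ne_bot hx
  have hjl : j < l + 1 :=
    (ENNReal.monotone_zpow ENNReal.one_lt_two.le).reflect_lt (hlarge.trans_le hl.2)
  obtain ⟨i, rfl⟩ := Int.le.dest (Int.lt_add_one_iff.1 hjl)
  refine le_add_left (le_trans ?_ (ENNReal.le_tsum i))
  rw [indicator_of_mem hl]
  exact hl.2

lemma two_zpow_rpow_mul_pow (hp : 0 < p) (D : ℝ≥0∞) (j : ℤ) (i : ℕ) :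
    ((2 : ℝ≥0∞) ^ (j + 1 + 1)) ^ p * D ^ i =
      4 ^ p * (D / 2 ^ p) ^ i * ((2 : ℝ≥0∞) ^ (j + i)) ^ p := by
  have h2 : (2 : ℝ≥0∞) ^ p ≠ 0 := by simp
  have h2' : (2 : ℝ≥0∞) ^ p ≠ ∞ := by finiteness
  have hi : D ^ i = (D / 2 ^ p) ^ i * ((2 : ℝ≥0∞) ^ i) ^ p := by
    rw [← ENNReal.rpow_natCast 2 i, ← ENNReal.rpow_mul, mul_comm (i : ℝ), ENNReal.rpow_mul,
      ENNReal.rpow_natCast, ← mul_pow, ENNReal.div_mul_cancel h2 h2']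
  have h4 : (2 : ℝ≥0∞) ^ (j + 1 + 1) = 4 * 2 ^ j := by
    rw [add_assoc, ENNReal.zpow_add two_ne_zero ENNReal.ofNat_ne_top, mul_comm]
    norm_num [zpow_ofNat]
  rw [h4, hi, ENNReal.zpow_add two_ne_zero ENNReal.ofNat_ne_top, zpow_natCast,
    ENNReal.mul_rpow_of_nonneg _ _ hp.le, ENNReal.mul_rpow_of_nonneg _ _ hp.le]
  ring

variable [MeasurableSpace α] {ν : Measure α}

lemma measurableSet_dyadicShell (hg : Measurable g) (l : ℤ) : MeasurableSet (dyadicShell g l) :=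
  hg measurableSet_Ioc

/-- The factors `4⁻¹ ^ (i + 1)` are chosen so that
`2 ^ j + ∑' i, 2 ^ (j + i + 1) * 4⁻¹ ^ (i + 1) = 2 ^ (j + 1)`. -/
lemma setLIntegral_le_two_zpow_mul (hg : Measurable g) (hfin : ∀ x, g x ≠ ∞) (j : ℤ) {B : Set α}
    (h : ∀ i : ℕ, ν (dyadicShell g (j + i) ∩ B) ≤ 4⁻¹ ^ (i + 1) * ν B) :
    ∫⁻ x in B, g x ∂ν ≤ 2 ^ (j + 1) * ν B := by
  have hm := measurableSet_dyadicShell hg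
  have hterm : ∀ i : ℕ, (2 : ℝ≥0∞) ^ (j + i + 1) * 4⁻¹ ^ (i + 1) = 2 ^ j * 2⁻¹ ^ (i + 1) :=
    fun i => by
      have hquarter : (2 : ℝ≥0∞) * 4⁻¹ = 2⁻¹ := by
        rw [show (4 : ℝ≥0∞) = 2 * 2 by norm_num, ENNReal.mul_inv (by simp) (by simp), ← mul_assoc,
          ENNReal.mul_inv_cancel (by simp) (by simp), one_mul]
      rw [← hquarter, mul_pow, add_assoc, ENNReal.zpow_add two_ne_zero ENNReal.ofNat_ne_top,
        mul_assoc]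
      norm_cast
  calc ∫⁻ x in B, g x ∂ν
      ≤ ∫⁻ x in B, (2 ^ j +
          ∑' i : ℕ, (dyadicShell g (j + i)).indicator (fun _ => 2 ^ (j + i + 1)) x) ∂ν :=
        lintegral_mono fun x => le_add_tsum_indicator_dyadicShell j (hfin x)
    _ = 2 ^ j * ν B + ∑' i : ℕ, 2 ^ (j + i + 1) * ν (dyadicShell g (j + i) ∩ B) := by
        rw [lintegral_add_left measurable_const, setLIntegral_const,
          lintegral_tsum fun i => (measurable_const.indicator (hm _)).aemeasurable]
        simp only [lintegral_indicator_const (hm _), Measure.restrict_apply (hm _)]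
    _ ≤ 2 ^ j * ν B + ∑' i : ℕ, 2 ^ (j + i + 1) * (4⁻¹ ^ (i + 1) * ν B) := by
        gcongr with i
        exact h i
    _ = 2 ^ (j + 1) * ν B := by
        simp only [← mul_assoc, hterm, ENNReal.tsum_mul_right, ENNReal.tsum_mul_left]
        rw [ENNReal.tsum_geometric_add_one, ENNReal.one_sub_inv_two, inv_inv,
          ENNReal.inv_mul_cancel (by simp) (by simp),
          ENNReal.zpow_add two_ne_zero ENNReal.ofNat_ne_top, zpow_one]
        ring

lemma lintegral_rpow_le_tsum_measure {F : α → ℝ≥0∞} (hF : Measurable F) (hp : 0 < p) :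
    ∫⁻ x, F x ^ p ∂ν ≤ ∑' j : ℤ, (2 ^ (j + 1)) ^ p * ν {x | 2 ^ j < F x} := by
  have hm : ∀ j : ℤ, MeasurableSet {x | 2 ^ j < F x} := fun j => hF measurableSet_Ioi
  calc ∫⁻ x, F x ^ p ∂ν
      ≤ ∫⁻ x, ∑' j : ℤ, {x | 2 ^ j < F x}.indicator (fun _ => (2 ^ (j + 1)) ^ p) x ∂ν :=
        lintegral_mono fun x => rpow_le_tsum_indicator_Ioi_two_zpow hp (F x)
    _ = _ := by
        rw [lintegral_tsum fun j => (measurable_const.indicator (hm j)).aemeasurable]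
        exact tsum_congr fun j => lintegral_indicator_const (hm j) _

lemma tsum_measure_dyadicShell_le_lintegral_rpow (hg : Measurable g) (hp : 0 ≤ p) :
    ∑' l : ℤ, (2 ^ l) ^ p * ν (dyadicShell g l) ≤ ∫⁻ x, g x ^ p ∂ν := by
  have hm := measurableSet_dyadicShell hg
  calc ∑' l : ℤ, (2 ^ l) ^ p * ν (dyadicShell g l)
      ≤ ∑' l : ℤ, ∫⁻ x in dyadicShell g l, g x ^ p ∂ν := by
        refine ENNReal.tsum_le_tsum fun l => ?_
        rw [← setLIntegral_const]
        exact setLIntegral_mono' (hm l) fun x hx => ENNReal.rpow_le_rpow hx.1.le hp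
    _ = ∫⁻ x in ⋃ l, dyadicShell g l, g x ^ p ∂ν :=
        (lintegral_iUnion hm (pairwise_disjoint_dyadicShell g) _).symm
    _ ≤ ∫⁻ x, g x ^ p ∂ν := setLIntegral_le_lintegral _ _

lemma lintegral_rpow_le_of_measure_le_tsum_dyadicShell {F : α → ℝ≥0∞} (hF : Measurable F)
    (hg : Measurable g) (hp : 0 < p) {A D : ℝ≥0∞}
    (h : ∀ j : ℤ, ν {x | 2 ^ (j + 1) < F x} ≤
      ∑' i : ℕ, A * D ^ i * ν (dyadicShell g (j + i))) :
    ∫⁻ x, F x ^ p ∂ν ≤ A * 4 ^ p * (∑' i : ℕ, (D / 2 ^ p) ^ i) * ∫⁻ x, g x ^ p ∂ν := by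
  set S := ∑' l : ℤ, (2 ^ l) ^ p * ν (dyadicShell g l)
  have hS : ∀ i : ℕ, ∑' j : ℤ, (2 ^ (j + i)) ^ p * ν (dyadicShell g (j + i)) = S := fun i =>
    (Equiv.addRight (i : ℤ)).tsum_eq fun l : ℤ => (2 ^ l) ^ p * ν (dyadicShell g l)
  calc ∫⁻ x, F x ^ p ∂ν
      ≤ ∑' j : ℤ, (2 ^ (j + 1)) ^ p * ν {x | 2 ^ j < F x} := lintegral_rpow_le_tsum_measure hF hp
    _ = ∑' j : ℤ, (2 ^ (j + 1 + 1)) ^ p * ν {x | 2 ^ (j + 1) < F x} :=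
        ((Equiv.addRight (1 : ℤ)).tsum_eq fun j : ℤ =>
          (2 ^ (j + 1)) ^ p * ν {x | 2 ^ j < F x}).symm
    _ ≤ ∑' j : ℤ, (2 ^ (j + 1 + 1)) ^ p * ∑' i : ℕ, A * D ^ i * ν (dyadicShell g (j + i)) := by
        gcongr with j
        exact h j
    _ = ∑' (j : ℤ) (i : ℕ), A * 4 ^ p * (D / 2 ^ p) ^ i *
          ((2 ^ (j + i)) ^ p * ν (dyadicShell g (j + i))) := by
        refine tsum_congr fun j => ENNReal.tsum_mul_left.symm.trans (tsum_congr fun i => ?_)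
        calc (2 ^ (j + 1 + 1)) ^ p * (A * D ^ i * ν (dyadicShell g (j + i)))
            = A * ((2 ^ (j + 1 + 1)) ^ p * D ^ i) * ν (dyadicShell g (j + i)) := by ring
          _ = _ := by rw [two_zpow_rpow_mul_pow hp]; ring
    _ = A * 4 ^ p * (∑' i : ℕ, (D / 2 ^ p) ^ i) * S := by
        rw [ENNReal.tsum_comm]
        simp only [ENNReal.tsum_mul_left, hS, ENNReal.tsum_mul_right]
    _ ≤ _ := by
        gcongr
        exact tsum_measure_dyadicShell_le_lintegral_rpow hg hp.le

end DyadicLayers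

/-- A homothecy invariant basis of convex sets: a homothecy invariant collection of nonempty
bounded open convex sets. -/
structure IsConvexHomothecyBasis {n : ℕ} (𝔅 : Set (Set (EuclideanSpace ℝ (Fin n)))) : Prop where
  isConvexBasisSet : ∀ B ∈ 𝔅, IsConvexBasisSet B
  homothecyInvariant : HomothecyInvariant 𝔅

section HomothecyBasis

open AffineMap

variable {n : ℕ} {𝔅 : Set (Set (EuclideanSpace ℝ (Fin n)))} {B : Set (EuclideanSpace ℝ (Fin n))}
  {μ : Measure (EuclideanSpace ℝ (Fin n))} {Δ : ℝ}

namespace IsConvexHomothecyBasis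

lemma nonempty (h𝔅 : IsConvexHomothecyBasis 𝔅) (hB : B ∈ 𝔅) : B.Nonempty :=
  (h𝔅.isConvexBasisSet B hB).1

lemma isBounded (h𝔅 : IsConvexHomothecyBasis 𝔅) (hB : B ∈ 𝔅) : Bornology.IsBounded B :=
  (h𝔅.isConvexBasisSet B hB).2.1

lemma isOpen (h𝔅 : IsConvexHomothecyBasis 𝔅) (hB : B ∈ 𝔅) : IsOpen B :=
  (h𝔅.isConvexBasisSet B hB).2.2.1

lemma convex (h𝔅 : IsConvexHomothecyBasis 𝔅) (hB : B ∈ 𝔅) : Convex ℝ B :=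
  (h𝔅.isConvexBasisSet B hB).2.2.2

lemma measure_ne_top [IsLocallyFiniteMeasure μ] (h𝔅 : IsConvexHomothecyBasis 𝔅) (hB : B ∈ 𝔅) :
    μ B ≠ ∞ :=
  (h𝔅.isBounded hB).measure_lt_top.ne

end IsConvexHomothecyBasis

lemma homothety_image_eq_vadd_smul (x : EuclideanSpace ℝ (Fin n)) (t : ℝ)
    (B : Set (EuclideanSpace ℝ (Fin n))) : homothety x t '' B = (x - t • x) +ᵥ t • B := by
  rw [← image_smul, ← image_vadd, image_image]
  refine image_congr fun y _ => ?_
  simp only [homothety_apply, vsub_eq_sub, vadd_eq_add]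
  module

lemma IsConvexHomothecyBasis.homothety_image_mem (h𝔅 : IsConvexHomothecyBasis 𝔅) (hB : B ∈ 𝔅)
    (x : EuclideanSpace ℝ (Fin n)) {t : ℝ} (ht : 0 < t) : homothety x t '' B ∈ 𝔅 := by
  rw [homothety_image_eq_vadd_smul]
  exact (h𝔅.homothecyInvariant _ ((h𝔅.homothecyInvariant B hB).2 t ht)).1 _

lemma measure_homothety_two_pow_image_le (h𝔅 : IsConvexHomothecyBasis 𝔅)
    (hμ : DoublingWrt μ 𝔅 Δ) (hB : B ∈ 𝔅) {c : EuclideanSpace ℝ (Fin n)} (hc : c ∈ B) (k : ℕ) :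
    μ (homothety c ((2 : ℝ) ^ k) '' B) ≤ ENNReal.ofReal Δ ^ k * μ B := by
  induction k with
  | zero => simp
  | succ k ih =>
    set B' := homothety c ((2 : ℝ) ^ k) '' B
    have hB' : B' ∈ 𝔅 := h𝔅.homothety_image_mem hB c (by positivity)
    have hcB' : c ∈ interior B' := by
      rw [(h𝔅.isOpen hB').interior_eq]
      exact ⟨c, hc, homothety_apply_same c _⟩
    have hsub : B' ⊆ homothety c (2 : ℝ) '' B' :=
      ((h𝔅.convex hB').subset_interior_image_homothety_of_one_lt hcB' 2 one_lt_two).trans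
        interior_subset
    rw [homothety_image_eq_vadd_smul] at hsub
    calc μ (homothety c ((2 : ℝ) ^ (k + 1)) '' B)
        = μ ((c - (2 : ℝ) • c) +ᵥ (2 : ℝ) • B') := by
          rw [pow_succ', homothety_mul, coe_comp, image_comp, homothety_image_eq_vadd_smul c 2]
      _ ≤ ENNReal.ofReal Δ * μ B' := hμ B' hB' _ hsub
      _ ≤ ENNReal.ofReal Δ * (ENNReal.ofReal Δ ^ k * μ B) := by gcongr
      _ = ENNReal.ofReal Δ ^ (k + 1) * μ B := by rw [pow_succ', mul_assoc]

lemma measure_pos_of_mem_basis (h𝔅 : IsConvexHomothecyBasis 𝔅) (hμ : DoublingWrt μ 𝔅 Δ)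
    (hμ0 : μ ≠ 0) (hB : B ∈ 𝔅) : 0 < μ B := by
  refine pos_iff_ne_zero.2 fun hB0 => hμ0 (Measure.measure_univ_eq_zero.1 ?_)
  obtain ⟨c, hc⟩ := h𝔅.nonempty hB
  have hcover : ⋃ k : ℕ, homothety c ((2 : ℝ) ^ k) '' B = univ := by
    refine eq_univ_of_forall fun x => mem_iUnion.2 ?_
    have hlim : Tendsto (fun k : ℕ => homothety c ((2 : ℝ) ^ k)⁻¹ x) atTop (𝓝 c) := by
      have h0 : Tendsto (fun k : ℕ => ((2 : ℝ) ^ k)⁻¹) atTop (𝓝 0) :=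
        (tendsto_pow_atTop_atTop_of_one_lt one_lt_two).inv_tendsto_atTop
      simpa [homothety_apply] using (h0.smul_const (x - c)).add_const c
    obtain ⟨k, hk⟩ := (hlim.eventually ((h𝔅.isOpen hB).mem_nhds hc)).exists
    exact ⟨k, by rwa [homothety_image_eq_preimage c (by positivity)]⟩
  rw [← hcover]
  refine measure_iUnion_null fun k => le_antisymm ?_ zero_le
  simpa [hB0] using measure_homothety_two_pow_image_le h𝔅 hμ hB hc k

lemma exists_pairwiseDisjoint_homothety_measure_le (h𝔅 : IsConvexHomothecyBasis 𝔅)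
    (hμ : DoublingWrt μ 𝔅 Δ) (hB : B ∈ 𝔅) {ι : Type*} (x : ι → EuclideanSpace ℝ (Fin n))
    {t : ι → ℝ} (ht : ∀ i, t i ∈ Ioc (0 : ℝ) 1) :
    ∃ u : Set ι, u.Countable ∧ u.PairwiseDisjoint (fun i => homothety (x i) (t i) '' B) ∧
      μ (⋃ i, closure (homothety (x i) (t i) '' B)) ≤
        ENNReal.ofReal Δ ^ (n + 2) * μ (⋃ i ∈ u, homothety (x i) (t i) '' B) := by
  set F : ι → Set (EuclideanSpace ℝ (Fin n)) := fun i => homothety (x i) (t i) '' B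
  have hF : ∀ i, F i ∈ 𝔅 := fun i => h𝔅.homothety_image_mem hB _ (ht i).1
  obtain ⟨u, -, hdisj, hu⟩ := Vitali.exists_disjoint_subfamily_covering_enlargement F univ t 2
    one_lt_two (fun i _ => (ht i).1.le) 1 (fun i _ => (ht i).2) (fun i _ => h𝔅.nonempty (hF i))
  have hcount : u.Countable :=
    hdisj.countable_of_isOpen (fun i _ => h𝔅.isOpen (hF i)) (fun i _ => h𝔅.nonempty (hF i))
  obtain ⟨c, hc, hengulf⟩ := exists_closure_homothety_subset (h𝔅.convex hB) (h𝔅.isOpen hB)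
    (h𝔅.isBounded hB) (h𝔅.nonempty hB)
  have hpow : 2 * (Module.finrank ℝ (EuclideanSpace ℝ (Fin n)) : ℝ) + 3 < 2 ^ (n + 2) := by
    have : 2 * n + 3 < 2 ^ (n + 2) := by
      have := n.lt_two_pow_self
      rw [pow_add]
      omega
    rw [finrank_euclideanSpace_fin]
    exact_mod_cast this
  set G : ι → Set (EuclideanSpace ℝ (Fin n)) := fun i =>
    homothety (homothety (x i) (t i) c) ((2 : ℝ) ^ (n + 2)) '' F i
  have hcover : ⋃ i, closure (F i) ⊆ ⋃ j ∈ u, G j := by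
    refine iUnion_subset fun i => ?_
    obtain ⟨j, hj, hij, htij⟩ := hu i (mem_univ i)
    exact (hengulf _ _ _ _ _ (ht i).1 (ht j).1 htij hpow hij).trans
      (subset_biUnion_of_mem (u := G) hj)
  refine ⟨u, hcount, hdisj, ?_⟩
  calc μ (⋃ i, closure (F i)) ≤ ∑' i : u, μ (G i) :=
        (measure_mono hcover).trans (measure_biUnion_le μ hcount _)
    _ ≤ ∑' i : u, ENNReal.ofReal Δ ^ (n + 2) * μ (F i) := ENNReal.tsum_le_tsum fun i =>
        measure_homothety_two_pow_image_le h𝔅 hμ (hF i) (mem_image_of_mem _ hc) _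
    _ = ENNReal.ofReal Δ ^ (n + 2) * μ (⋃ i ∈ u, F i) := by
        rw [ENNReal.tsum_mul_left,
          measure_biUnion hcount hdisj fun i _ => (h𝔅.isOpen (hF i)).measurableSet]

section Density

lemma measure_eq_zero_of_forall_isOpen_exists {α : Type*} [TopologicalSpace α] [MeasurableSpace α]
    {μ : Measure α} [μ.OuterRegular] {N : Set α} (hN : μ N ≠ ∞) {l D : ℝ≥0∞} (hl : l < 1)
    (hD : D ≠ ∞)
    (h : ∀ U, IsOpen U → N ⊆ U →
      ∃ W ⊆ U, MeasurableSet W ∧ μ N ≤ D * μ W ∧ μ (N ∩ W) ≤ l * μ W) : μ N = 0 := by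
  by_contra hN0
  obtain ⟨ε, hε, hεN⟩ := ENNReal.exists_nnreal_pos_mul_lt hD
    (mul_ne_zero (tsub_pos_iff_lt.2 hl).ne' hN0)
  obtain ⟨U, hNU, hUo, hU⟩ := N.exists_isOpen_le_add μ (ENNReal.coe_ne_zero.2 hε.ne')
  obtain ⟨W, hWU, hWm, hNW, hlW⟩ := h U hUo hNU
  have hW_fin : μ W ≠ ∞ := ne_top_of_le_ne_top (ENNReal.add_ne_top.2 ⟨hN, ENNReal.coe_ne_top⟩)
    ((measure_mono hWU).trans hU)
  have hWε : μ W ≤ l * μ W + ε := by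
    refine ENNReal.le_of_add_le_add_right
      (ne_top_of_le_ne_top hN (measure_mono (sdiff_subset (s := N) (t := W)))) ?_
    calc μ W + μ (N \ W) ≤ μ (U ∩ W) + μ (U \ W) := by
          rw [inter_eq_right.2 hWU]
          gcongr
      _ = μ U := measure_inter_add_sdiff U hWm
      _ ≤ μ (N ∩ W) + μ (N \ W) + ε := by rwa [measure_inter_add_sdiff N hWm]
      _ ≤ l * μ W + μ (N \ W) + ε := by gcongr
      _ = l * μ W + ε + μ (N \ W) := by ring
  refine hεN.not_ge ?_
  calc (1 - l) * μ N ≤ (1 - l) * (D * μ W) := by gcongr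
    _ = (μ W - l * μ W) * D := by
      rw [mul_comm D, ← mul_assoc, ENNReal.sub_mul fun _ _ => hW_fin, one_mul]
    _ ≤ ε * D := by
      gcongr
      exact tsub_le_iff_left.2 hWε

variable [IsLocallyFiniteMeasure μ]

lemma measure_eq_zero_of_frequently_measure_inter_le (h𝔅 : IsConvexHomothecyBasis 𝔅)
    (hμ : DoublingWrt μ 𝔅 Δ) (hB : B ∈ 𝔅) {N : Set (EuclideanSpace ℝ (Fin n))}
    (hN : N ⊆ closure B) {l : ℝ≥0∞} (hl : l < 1)
    (hfreq : ∀ x ∈ N, ∃ᶠ t in 𝓝[>] (0 : ℝ),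
      μ (N ∩ homothety x t '' B) ≤ l * μ (homothety x t '' B)) : μ N = 0 := by
  refine measure_eq_zero_of_forall_isOpen_exists
    ((measure_mono hN).trans_lt (h𝔅.isBounded hB).closure.measure_lt_top).ne hl
    (D := ENNReal.ofReal Δ ^ (n + 2)) (by finiteness) fun U hUo hNU => ?_
  have hsmall : ∀ x : N, ∃ t ∈ Ioc (0 : ℝ) 1, homothety x.1 t '' B ⊆ U ∧
      μ (N ∩ homothety x.1 t '' B) ≤ l * μ (homothety x.1 t '' B) := fun x => by
    obtain ⟨t, hlt, htU, ht⟩ := ((hfreq x x.2).and_eventually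
      (((eventually_homothety_image_subset (h𝔅.isBounded hB)
        (hUo.mem_nhds (hNU x.2))).filter_mono nhdsWithin_le_nhds).and
        (Ioc_mem_nhdsGT zero_lt_one))).exists
    exact ⟨t, ht, htU, hlt⟩
  choose t ht htU htl using hsmall
  obtain ⟨u, hcount, hdisj, hW⟩ :=
    exists_pairwiseDisjoint_homothety_measure_le h𝔅 hμ hB (fun x : N => x.1) ht
  have hmeas : ∀ x : N, MeasurableSet (homothety x.1 (t x) '' B) := fun x =>
    (h𝔅.isOpen (h𝔅.homothety_image_mem hB _ (ht x).1)).measurableSet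
  refine ⟨_, iUnion₂_subset fun x _ => htU x, .biUnion hcount fun x _ => hmeas x, ?_, ?_⟩
  · refine (measure_mono fun x hx => mem_iUnion.2 ⟨⟨x, hx⟩, ?_⟩).trans hW
    rw [closure_homothety_image (h𝔅.isBounded hB)]
    exact ⟨x, hN hx, homothety_apply_same x _⟩
  · rw [inter_iUnion₂, measure_biUnion hcount hdisj fun x _ => hmeas x, ← ENNReal.tsum_mul_left]
    exact (measure_biUnion_le μ hcount _).trans (ENNReal.tsum_le_tsum fun x => htl x)

lemma measure_frontier_eq_zero (h𝔅 : IsConvexHomothecyBasis 𝔅) (hμ : DoublingWrt μ 𝔅 Δ)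
    (hB : B ∈ 𝔅) : μ (frontier B) = 0 := by
  refine measure_eq_zero_of_frequently_measure_inter_le h𝔅 hμ hB frontier_subset_closure
    zero_lt_one fun x hx => Eventually.frequently ?_
  filter_upwards [Ioc_mem_nhdsGT zero_lt_one] with t ht
  have hsub : homothety x t '' B ⊆ B :=
    homothety_image_subset (h𝔅.convex hB) (h𝔅.isOpen hB) (frontier_subset_closure hx) ht
  have hdisj : Disjoint (frontier B) B :=
    (disjoint_iff_inter_eq_empty.2 (h𝔅.isOpen hB).inter_frontier_eq).symm
  simp [(hdisj.mono_right hsub).inter_eq]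

lemma measure_setOf_frequently_lt_measure_inter (h𝔅 : IsConvexHomothecyBasis 𝔅)
    (hμ : DoublingWrt μ 𝔅 Δ) (hB : B ∈ 𝔅) (E : Set (EuclideanSpace ℝ (Fin n))) {l : ℝ≥0∞}
    (hl : l < 1) :
    μ {x ∈ E ∩ B | ∃ᶠ t in 𝓝[>] (0 : ℝ),
      l * μ (homothety x t '' B) < μ (E ∩ homothety x t '' B)} = μ (E ∩ B) := by
  set G := {x ∈ E ∩ B | ∃ᶠ t in 𝓝[>] (0 : ℝ),
    l * μ (homothety x t '' B) < μ (E ∩ homothety x t '' B)}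
  have hnull : μ ((E ∩ B) \ G) = 0 := by
    refine measure_eq_zero_of_frequently_measure_inter_le h𝔅 hμ hB
      (fun x hx => subset_closure hx.1.2) hl fun x hx => ?_
    have hsparse := not_frequently.1 fun h => hx.2 ⟨hx.1, h⟩
    refine hsparse.frequently.mono fun t ht => (measure_mono ?_).trans (not_lt.1 ht)
    exact inter_subset_inter_left _ fun y hy => hy.1.1
  exact measure_eq_measure_of_null_sdiff (sep_subset _ _) hnull

lemma continuousOn_measure_inter_homothety (h𝔅 : IsConvexHomothecyBasis 𝔅)
    (hμ : DoublingWrt μ 𝔅 Δ) (hB : B ∈ 𝔅) {x : EuclideanSpace ℝ (Fin n)} (hx : x ∈ B)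
    {A : Set (EuclideanSpace ℝ (Fin n))} (hA : MeasurableSet A) :
    ContinuousOn (fun t : ℝ => μ (A ∩ homothety x t '' B)) (Ioc 0 1) := by
  have hcopy : ∀ t ∈ Ioc (0 : ℝ) 1, A ∩ homothety x t '' B = A ∩ homothety x t⁻¹ ⁻¹' B :=
    fun t ht => by rw [homothety_image_eq_preimage x ht.1.ne']
  refine ContinuousOn.congr (f := fun t : ℝ => μ (A ∩ homothety x t⁻¹ ⁻¹' B)) (fun s hs => ?_)
    fun t ht => by rw [hcopy t ht]
  have hmeas : ∀ t : ℝ, MeasurableSet (A ∩ homothety x t⁻¹ ⁻¹' B) := fun t =>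
    hA.inter ((h𝔅.isOpen hB).preimage (homothety_continuous x _)).measurableSet
  refine tendsto_measure_of_ae_tendsto_indicator _ (hmeas s) hmeas
    (h𝔅.isOpen hB).measurableSet (h𝔅.measure_ne_top hB) ?_ ?_
  · filter_upwards [self_mem_nhdsWithin] with t ht
    rw [← hcopy t ht]
    exact inter_subset_right.trans
      (homothety_image_subset (h𝔅.convex hB) (h𝔅.isOpen hB) (subset_closure hx) ht)
  · have hnull := measure_frontier_eq_zero h𝔅 hμ (h𝔅.homothety_image_mem hB x hs.1)
    filter_upwards [measure_eq_zero_iff_ae_notMem.1 hnull] with y hy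
    filter_upwards [self_mem_nhdsWithin,
      (eventually_mem_homothety_image_iff hs.1.ne' hy).filter_mono nhdsWithin_le_nhds] with t ht hyt
    rw [← hcopy t ht, ← hcopy s hs]
    exact and_congr_right fun _ => hyt

end Density

/-- The halo of `E` at level `l`, that is, the superlevel set `{M_{𝔅,μ}(1_E) > l}`. The level is
extended nonnegative, like the values of `maxOp`. -/
def halo {n : ℕ} (μ : Measure (EuclideanSpace ℝ (Fin n)))
    (𝔅 : Set (Set (EuclideanSpace ℝ (Fin n)))) (l : ℝ≥0∞) (E : Set (EuclideanSpace ℝ (Fin n))) :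
    Set (EuclideanSpace ℝ (Fin n)) :=
  {x | l < maxOp μ 𝔅 (E.indicator 1) x}

section Halo

variable {ν : Measure (EuclideanSpace ℝ (Fin n))} {E : Set (EuclideanSpace ℝ (Fin n))}
  {l γ γ' : ℝ≥0∞}

lemma lt_maxOp_iff {f : EuclideanSpace ℝ (Fin n) → ℝ} {x : EuclideanSpace ℝ (Fin n)} :
    l < maxOp μ 𝔅 f x ↔
      ∃ B ∈ 𝔅, x ∈ B ∧ 0 < μ B ∧ l < (∫⁻ y in B, ENNReal.ofReal |f y| ∂μ) / μ B := by
  simp only [maxOp, lt_iSup_iff, exists_prop]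

lemma lowerSemicontinuous_maxOp (h𝔅 : ∀ B ∈ 𝔅, IsOpen B) (f : EuclideanSpace ℝ (Fin n) → ℝ) :
    LowerSemicontinuous (maxOp μ 𝔅 f) := by
  intro x l hx
  obtain ⟨B, hB, hxB, hpos, hl⟩ := lt_maxOp_iff.1 hx
  filter_upwards [(h𝔅 B hB).mem_nhds hxB] with y hy
  exact lt_maxOp_iff.2 ⟨B, hB, hy, hpos, hl⟩

lemma isOpen_halo (h𝔅 : ∀ B ∈ 𝔅, IsOpen B) : IsOpen (halo μ 𝔅 l E) :=
  (lowerSemicontinuous_maxOp h𝔅 _).isOpen_preimage l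

lemma mem_halo_iff (hE : MeasurableSet E) (hfin : ∀ B ∈ 𝔅, μ B ≠ ∞)
    {x : EuclideanSpace ℝ (Fin n)} :
    x ∈ halo μ 𝔅 l E ↔ ∃ B ∈ 𝔅, x ∈ B ∧ 0 < μ B ∧ l * μ B < μ (E ∩ B) := by
  have hint : ∀ B : Set (EuclideanSpace ℝ (Fin n)),
      ∫⁻ y in B, ENNReal.ofReal |E.indicator 1 y| ∂μ = μ (E ∩ B) := fun B => by
    rw [← Measure.restrict_apply hE, ← lintegral_indicator_one hE]
    refine lintegral_congr fun y => ?_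
    by_cases hy : y ∈ E <;> simp [hy]
  refine lt_maxOp_iff.trans (exists_congr fun B => and_congr_right fun hB => and_congr_right
    fun _ => and_congr_right fun hpos => ?_)
  rw [hint, ENNReal.lt_div_iff_mul_lt (.inl hpos.ne') (.inl (hfin B hB))]

lemma subset_halo (hE : MeasurableSet E) (hfin : ∀ B ∈ 𝔅, μ B ≠ ∞) (hB : B ∈ 𝔅) (hpos : 0 < μ B)
    (hlt : l * μ B < μ (E ∩ B)) : B ⊆ halo μ 𝔅 l E :=
  fun _ hx => (mem_halo_iff hE hfin).2 ⟨B, hB, hx, hpos, hlt⟩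

lemma measure_iterate_halo_le (h𝔅 : ∀ B ∈ 𝔅, IsOpen B) {γ c : ℝ}
    (hT : TauberianCond μ ν 𝔅 γ c) (hE : MeasurableSet E) (k : ℕ) :
    MeasurableSet ((halo μ 𝔅 (ENNReal.ofReal γ))^[k] E) ∧
      ν ((halo μ 𝔅 (ENNReal.ofReal γ))^[k] E) ≤ ENNReal.ofReal c ^ k * ν E := by
  induction k with
  | zero => exact ⟨hE, by simp⟩
  | succ k ih =>
    rw [Function.iterate_succ_apply']
    refine ⟨(isOpen_halo h𝔅).measurableSet, (hT _ ih.1).trans ?_⟩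
    rw [pow_succ', mul_assoc]
    gcongr
    exact ih.2

variable [IsLocallyFiniteMeasure μ]

lemma exists_measure_inter_homothety_eq (h𝔅 : IsConvexHomothecyBasis 𝔅)
    (hμ : DoublingWrt μ 𝔅 Δ) (hB : B ∈ 𝔅) (hE : MeasurableSet E) (hγ' : γ' ≠ ∞)
    {x : EuclideanSpace ℝ (Fin n)} (hx : x ∈ B) {s : ℝ} (hs : s ∈ Ioc (0 : ℝ) 1)
    (hle : γ' * μ (homothety x s '' B) ≤ μ (E ∩ homothety x s '' B))
    (hEB : μ (E ∩ B) ≤ γ' * μ B) :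
    ∃ t ∈ Ioc (0 : ℝ) 1, μ (E ∩ homothety x t '' B) = γ' * μ (homothety x t '' B) := by
  have hcont := continuousOn_measure_inter_homothety h𝔅 hμ hB hx MeasurableSet.univ
  simp only [univ_inter] at hcont
  refine isPreconnected_Ioc.intermediate_value₂ (right_mem_Ioc.2 zero_lt_one) hs
    (continuousOn_measure_inter_homothety h𝔅 hμ hB hx hE)
    ((ENNReal.continuous_const_mul hγ').comp_continuousOn hcont) ?_ hle
  simpa using hEB

/-- Around almost every point of `E ∩ B` there is a copy of `B` in which `E` has density exactly
`γ'`: the density is close to `1` at small scales and at most `γ'` at scale `1`. -/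
lemma exists_subset_halo_measure_inter_eq (h𝔅 : IsConvexHomothecyBasis 𝔅)
    (hμ : DoublingWrt μ 𝔅 Δ) (hμ0 : μ ≠ 0) (hB : B ∈ 𝔅) (hE : MeasurableSet E) (hγ : γ < γ')
    (hγ' : γ' < 1) (hEB : μ (E ∩ B) ≤ γ' * μ B) :
    ∃ W ⊆ halo μ 𝔅 γ E ∩ B, MeasurableSet W ∧ μ (E ∩ W) = γ' * μ W ∧
      μ (E ∩ B) ≤ ENNReal.ofReal Δ ^ (n + 2) * μ W ∧
      μ (E ∩ B) ≤ μ (E ∩ (halo μ 𝔅 γ E ∩ B)) := by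
  set G := {x ∈ E ∩ B | ∃ᶠ t in 𝓝[>] (0 : ℝ),
    γ' * μ (homothety x t '' B) < μ (E ∩ homothety x t '' B)}
  have hG : μ (E ∩ B) ≤ μ G :=
    (measure_setOf_frequently_lt_measure_inter h𝔅 hμ hB E hγ').ge
  have hdens : ∀ x : G, ∃ t ∈ Ioc (0 : ℝ) 1,
      μ (E ∩ homothety x.1 t '' B) = γ' * μ (homothety x.1 t '' B) := fun x => by
    obtain ⟨s, hlt, hs⟩ := (x.2.2.and_eventually (Ioc_mem_nhdsGT zero_lt_one)).exists
    exact exists_measure_inter_homothety_eq h𝔅 hμ hB hE hγ'.ne_top x.2.1.2 hs hlt.le hEB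
  choose t ht htE using hdens
  set F : G → Set (EuclideanSpace ℝ (Fin n)) := fun x => homothety x.1 (t x) '' B
  have hF : ∀ x, F x ∈ 𝔅 := fun x => h𝔅.homothety_image_mem hB _ (ht x).1
  have hFm : ∀ x, MeasurableSet (F x) := fun x => (h𝔅.isOpen (hF x)).measurableSet
  have hxF : ∀ x : G, x.1 ∈ F x := fun x => ⟨x, x.2.1.2, homothety_apply_same x.1 _⟩
  have hFhalo : ∀ x, F x ⊆ halo μ 𝔅 γ E ∩ B := fun x => by
    have hpos := measure_pos_of_mem_basis h𝔅 hμ hμ0 (hF x)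
    refine subset_inter (subset_halo hE (fun B hB => h𝔅.measure_ne_top hB) (hF x) hpos ?_)
      (homothety_image_subset (h𝔅.convex hB) (h𝔅.isOpen hB) (subset_closure x.2.1.2) (ht x))
    rw [htE x]
    exact ENNReal.mul_lt_mul_left hpos.ne' (h𝔅.measure_ne_top (hF x)) hγ
  obtain ⟨u, hcount, hdisj, hW⟩ :=
    exists_pairwiseDisjoint_homothety_measure_le h𝔅 hμ hB (fun x : G => x.1) ht
  refine ⟨⋃ x ∈ u, F x, iUnion₂_subset fun x _ => hFhalo x, .biUnion hcount fun x _ => hFm x, ?_,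
    (hG.trans (measure_mono fun x hx => ?_)).trans hW, hG.trans (measure_mono fun x hx =>
      ⟨hx.1.1, hFhalo ⟨x, hx⟩ (hxF ⟨x, hx⟩)⟩)⟩
  · rw [inter_iUnion₂, measure_biUnion hcount (hdisj.mono fun x => inter_subset_right)
      fun x _ => hE.inter (hFm x), measure_biUnion hcount hdisj fun x _ => hFm x,
      ← ENNReal.tsum_mul_left]
    exact tsum_congr fun x => htE x
  · exact mem_iUnion.2 ⟨⟨x, hx⟩, subset_closure (hxF ⟨x, hx⟩)⟩

lemma mul_measure_inter_le_measure_halo_inter (h𝔅 : IsConvexHomothecyBasis 𝔅)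
    (hμ : DoublingWrt μ 𝔅 Δ) (hμ0 : μ ≠ 0) (hB : B ∈ 𝔅) (hE : MeasurableSet E) (hγ : γ < γ')
    (hγ' : γ' < 1) (hEB : μ (E ∩ B) ≤ γ' * μ B) :
    (1 + (1 - γ') / ENNReal.ofReal Δ ^ (n + 2)) * μ (E ∩ B) ≤ μ (halo μ 𝔅 γ E ∩ B) := by
  set D := ENNReal.ofReal Δ ^ (n + 2)
  obtain ⟨W, hWhalo, hWm, hEW, hWD, hEhalo⟩ :=
    exists_subset_halo_measure_inter_eq h𝔅 hμ hμ0 hB hE hγ hγ' hEB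
  have hW_fin : μ W ≠ ∞ := ne_top_of_le_ne_top (h𝔅.measure_ne_top hB)
    (measure_mono (hWhalo.trans inter_subset_right))
  have hnew : μ (W \ E) = (1 - γ') * μ W := by
    rw [← sdiff_inter_self_eq_sdiff, measure_sdiff inter_subset_right
      (hE.inter hWm).nullMeasurableSet
      (ne_top_of_le_ne_top hW_fin (measure_mono inter_subset_right)),
      hEW, ENNReal.sub_mul fun _ _ => hW_fin, one_mul]
  have hgain : (1 - γ') / D * μ (E ∩ B) ≤ μ (W \ E) := by
    rw [← ENNReal.mul_div_right_comm]
    refine ENNReal.div_le_of_le_mul ?_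
    calc (1 - γ') * μ (E ∩ B) ≤ (1 - γ') * (D * μ W) := by gcongr
      _ = μ (W \ E) * D := by rw [hnew]; ring
  calc (1 + (1 - γ') / D) * μ (E ∩ B) = μ (E ∩ B) + (1 - γ') / D * μ (E ∩ B) := by ring
    _ ≤ μ ((halo μ 𝔅 γ E ∩ B) ∩ E) + μ ((halo μ 𝔅 γ E ∩ B) \ E) := by
        rw [inter_comm _ E]
        exact add_le_add hEhalo (hgain.trans (measure_mono (sdiff_subset_sdiff_left hWhalo)))
    _ = μ (halo μ 𝔅 γ E ∩ B) := measure_inter_add_sdiff _ hE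

lemma subset_iterate_halo (h𝔅 : IsConvexHomothecyBasis 𝔅)
    (hμ : DoublingWrt μ 𝔅 Δ) (hμ0 : μ ≠ 0) (hB : B ∈ 𝔅) (hγ : γ < γ') (hγ' : γ' < 1) (k : ℕ)
    (hE : MeasurableSet E)
    (hBE : μ B ≤ (1 + (1 - γ') / ENNReal.ofReal Δ ^ (n + 2)) ^ k * μ (E ∩ B)) :
    B ⊆ (halo μ 𝔅 γ)^[k + 1] E := by
  have hfin := fun B hB => h𝔅.measure_ne_top (μ := μ) (B := B) hB
  have hpos := measure_pos_of_mem_basis h𝔅 hμ hμ0 hB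
  induction k generalizing E with
  | zero =>
    refine subset_halo hE hfin hB hpos (lt_of_lt_of_le ?_ (by simpa using hBE))
    simpa using ENNReal.mul_lt_mul_left hpos.ne' (hfin B hB) (hγ.trans hγ')
  | succ k ih =>
    rw [Function.iterate_succ_apply]
    refine ih (isOpen_halo fun B hB => h𝔅.isOpen hB).measurableSet ?_
    rcases lt_or_ge (γ' * μ B) (μ (E ∩ B)) with hlarge | hsmall
    · have hsub : B ⊆ halo μ 𝔅 γ E :=
        subset_halo hE hfin hB hpos (lt_of_le_of_lt (by gcongr) hlarge)
      rw [inter_eq_right.2 hsub]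
      exact le_mul_of_one_le_left zero_le (one_le_pow₀ le_self_add)
    · rw [pow_succ, mul_assoc] at hBE
      exact hBE.trans (by
        gcongr
        exact mul_measure_inter_le_measure_halo_inter h𝔅 hμ hμ0 hB hE hγ hγ' hsmall)

lemma halo_subset_iterate_halo (h𝔅 : IsConvexHomothecyBasis 𝔅)
    (hμ : DoublingWrt μ 𝔅 Δ) (hμ0 : μ ≠ 0) (hγ : γ < γ') (hγ' : γ' < 1) {k : ℕ}
    (hE : MeasurableSet E)
    (hl : 1 ≤ (1 + (1 - γ') / ENNReal.ofReal Δ ^ (n + 2)) ^ k * l) :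
    halo μ 𝔅 l E ⊆ (halo μ 𝔅 γ)^[k + 1] E := by
  intro x hx
  obtain ⟨B, hB, hxB, -, hlB⟩ := (mem_halo_iff hE fun B hB => h𝔅.measure_ne_top hB).1 hx
  refine subset_iterate_halo h𝔅 hμ hμ0 hB hγ hγ' k hE ?_ hxB
  calc μ B ≤ (1 + (1 - γ') / ENNReal.ofReal Δ ^ (n + 2)) ^ k * l * μ B :=
        le_mul_of_one_le_left zero_le hl
    _ ≤ (1 + (1 - γ') / ENNReal.ofReal Δ ^ (n + 2)) ^ k * μ (E ∩ B) := by
        rw [mul_assoc]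
        gcongr

lemma TauberianCond.exists_measure_halo_le (h𝔅 : IsConvexHomothecyBasis 𝔅)
    (hμ : DoublingWrt μ 𝔅 Δ) (hμ0 : μ ≠ 0) {γ c : ℝ} (hγ : γ < 1)
    (hT : TauberianCond μ ν 𝔅 γ c) :
    ∃ A D : ℝ≥0∞, A ≠ ∞ ∧ D ≠ ∞ ∧ ∀ (i : ℕ) (E : Set (EuclideanSpace ℝ (Fin n))),
      MeasurableSet E → ν (halo μ 𝔅 (4⁻¹ ^ i) E) ≤ A * D ^ i * ν E := by
  obtain ⟨γ', hγγ', hγ'⟩ := exists_between (ENNReal.ofReal_lt_one.2 hγ)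
  set q : ℝ≥0∞ := 1 + (1 - γ') / ENNReal.ofReal Δ ^ (n + 2)
  have hq : 1 < q := ENNReal.lt_add_right ENNReal.one_ne_top
    (ENNReal.div_pos (tsub_pos_iff_lt.2 hγ').ne' (by finiteness)).ne'
  obtain ⟨m, hm⟩ := ((ENNReal.tendsto_pow_atTop_nhds_top_iff.2 hq).eventually
    (eventually_ge_nhds (show (4 : ℝ≥0∞) < ∞ by simp))).exists
  refine ⟨ENNReal.ofReal c, ENNReal.ofReal c ^ m, by finiteness, by finiteness, fun i E hE => ?_⟩
  have hlevel : 1 ≤ q ^ (m * i) * 4⁻¹ ^ i := by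
    rw [pow_mul, ← mul_pow, ← div_eq_mul_inv]
    exact one_le_pow₀ ((ENNReal.le_div_iff_mul_le (by simp) (by simp)).2 (by simpa using hm))
  calc ν (halo μ 𝔅 (4⁻¹ ^ i) E)
      ≤ ν ((halo μ 𝔅 (ENNReal.ofReal γ))^[m * i + 1] E) :=
        measure_mono (halo_subset_iterate_halo h𝔅 hμ hμ0 hγγ' hγ' hE hlevel)
    _ ≤ ENNReal.ofReal c ^ (m * i + 1) * ν E :=
        (measure_iterate_halo_le (fun B hB => h𝔅.isOpen hB) hT hE _).2
    _ = ENNReal.ofReal c * (ENNReal.ofReal c ^ m) ^ i * ν E := by rw [pow_succ', pow_mul]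

end Halo

section Interpolation

variable {ν : Measure (EuclideanSpace ℝ (Fin n))} {f : EuclideanSpace ℝ (Fin n) → ℝ} {p : ℝ}

lemma setOf_lt_maxOp_subset_iUnion_halo (hfin : ∀ B ∈ 𝔅, μ B ≠ ∞) (hf : Measurable f) (j : ℤ) :
    {x | 2 ^ (j + 1) < maxOp μ 𝔅 f x} ⊆
      ⋃ i : ℕ, halo μ 𝔅 (4⁻¹ ^ (i + 1)) (dyadicShell (fun x => ENNReal.ofReal |f x|) (j + i)) := by
  intro x hx
  have hg : Measurable fun x => ENNReal.ofReal |f x| := by fun_prop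
  obtain ⟨B, hB, hxB, hpos, hlt⟩ := lt_maxOp_iff.1 hx
  by_contra hx'
  simp only [mem_iUnion, mem_halo_iff (measurableSet_dyadicShell hg _) hfin, not_exists, not_and,
    not_lt] at hx'
  refine hlt.not_ge (ENNReal.div_le_of_le_mul ?_)
  exact setLIntegral_le_two_zpow_mul hg (fun _ => ENNReal.ofReal_ne_top) j
    fun i => hx' i B hB hxB hpos

lemma boundedOnLp_of_measure_halo_le (hopen : ∀ B ∈ 𝔅, IsOpen B) (hfin : ∀ B ∈ 𝔅, μ B ≠ ∞)
    {A D : ℝ≥0∞} (hA : A ≠ ∞)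
    (h : ∀ (i : ℕ) (E : Set (EuclideanSpace ℝ (Fin n))), MeasurableSet E →
      ν (halo μ 𝔅 (4⁻¹ ^ (i + 1)) E) ≤ A * D ^ i * ν E)
    (hp : 0 < p) (hD : D < 2 ^ p) : BoundedOnLp μ ν 𝔅 p := by
  refine ⟨A * 4 ^ p * ∑' i : ℕ, (D / 2 ^ p) ^ i, ?_, fun f hf => ?_⟩
  · have hratio : D / 2 ^ p < 1 := by
      rwa [ENNReal.div_lt_iff (.inl (by simp)) (.inl (by finiteness)), one_mul]
    rw [ENNReal.tsum_geometric]
    exact ENNReal.mul_ne_top (by finiteness) (ENNReal.inv_ne_top.2 (tsub_pos_of_lt hratio).ne')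
  · have hg : Measurable fun x => ENNReal.ofReal |f x| := by fun_prop
    refine lintegral_rpow_le_of_measure_le_tsum_dyadicShell
      (lowerSemicontinuous_maxOp hopen f).measurable hg hp fun j => ?_
    calc ν {x | 2 ^ (j + 1) < maxOp μ 𝔅 f x}
        ≤ ν (⋃ i : ℕ, halo μ 𝔅 (4⁻¹ ^ (i + 1))
            (dyadicShell (fun x => ENNReal.ofReal |f x|) (j + i))) :=
          measure_mono (setOf_lt_maxOp_subset_iUnion_halo hfin hf j)
      _ ≤ ∑' i : ℕ, ν (halo μ 𝔅 (4⁻¹ ^ (i + 1))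
            (dyadicShell (fun x => ENNReal.ofReal |f x|) (j + i))) := measure_iUnion_le _
      _ ≤ _ := ENNReal.tsum_le_tsum fun i => h i _ (measurableSet_dyadicShell hg _)

lemma TauberianCond.exists_boundedOnLp [IsLocallyFiniteMeasure μ]
    (h𝔅 : IsConvexHomothecyBasis 𝔅) (hμ : DoublingWrt μ 𝔅 Δ) (hμ0 : μ ≠ 0) {γ c : ℝ} (hγ : γ < 1)
    (hT : TauberianCond μ ν 𝔅 γ c) : ∃ p₀ : ℝ, 1 < p₀ ∧ ∀ p, p₀ < p → BoundedOnLp μ ν 𝔅 p := by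
  obtain ⟨A, D, hA, hD, hhalo⟩ := hT.exists_measure_halo_le h𝔅 hμ hμ0 hγ
  obtain ⟨N, hN⟩ := ((ENNReal.tendsto_pow_atTop_nhds_top_iff.2 ENNReal.one_lt_two).eventually
    (eventually_gt_nhds hD.lt_top)).exists
  have hN0 : (0 : ℝ) ≤ N := N.cast_nonneg
  refine ⟨N + 2, by linarith [hN0], fun p hp => ?_⟩
  refine boundedOnLp_of_measure_halo_le (fun B hB => h𝔅.isOpen hB)
    (fun B hB => h𝔅.measure_ne_top hB) (ENNReal.mul_ne_top hA hD) (fun i E hE => ?_)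
    (by linarith [hN0]) (hN.trans_le ?_)
  · simpa only [pow_succ', mul_assoc] using hhalo (i + 1) E hE
  · rw [← ENNReal.rpow_natCast]
    exact ENNReal.rpow_le_rpow_of_exponent_le ENNReal.one_lt_two.le (by linarith)

lemma BoundedOnLp.exists_tauberianCond (hopen : ∀ B ∈ 𝔅, IsOpen B) (hp : 0 < p)
    (hb : BoundedOnLp μ ν 𝔅 p) {γ : ℝ} (hγ : 0 < γ) : ∃ c, 0 < c ∧ TauberianCond μ ν 𝔅 γ c := by
  obtain ⟨C, hC, hb⟩ := hb
  set a := ENNReal.ofReal γ ^ p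
  have ha : a ≠ 0 := by simp [a, hγ]
  have ha' : a ≠ ∞ := by finiteness
  have hCa : C / a ≠ ∞ := ENNReal.div_ne_top hC ha
  refine ⟨(C / a).toReal + 1, by positivity, fun E hE => ?_⟩
  have hnorm : ∫⁻ x, ENNReal.ofReal |E.indicator (1 : EuclideanSpace ℝ (Fin n) → ℝ) x| ^ p ∂ν
      = ν E := by
    rw [← lintegral_indicator_one hE]
    refine lintegral_congr fun x => ?_
    by_cases hx : x ∈ E <;> simp [hx, hp]
  have hmeas : Measurable fun x => maxOp μ 𝔅 (E.indicator 1) x ^ p :=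
    (lowerSemicontinuous_maxOp hopen _).measurable.pow_const p
  have hcheb : a * ν {x | ENNReal.ofReal γ < maxOp μ 𝔅 (E.indicator 1) x} ≤ C * ν E :=
    calc a * ν {x | ENNReal.ofReal γ < maxOp μ 𝔅 (E.indicator 1) x}
        ≤ a * ν {x | a ≤ maxOp μ 𝔅 (E.indicator 1) x ^ p} := by
          gcongr a * ?_
          exact measure_mono fun x hx => ENNReal.rpow_le_rpow (le_of_lt hx) hp.le
      _ ≤ ∫⁻ x, maxOp μ 𝔅 (E.indicator 1) x ^ p ∂ν := mul_meas_ge_le_lintegral hmeas a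
      _ ≤ C * ν E := hnorm ▸ hb _ (measurable_one.indicator hE)
  calc ν {x | ENNReal.ofReal γ < maxOp μ 𝔅 (E.indicator 1) x}
      ≤ C * ν E / a := (ENNReal.le_div_iff_mul_le (.inl ha) (.inl ha')).2 (mul_comm a _ ▸ hcheb)
    _ = C / a * ν E := ENNReal.mul_div_right_comm
    _ ≤ ENNReal.ofReal ((C / a).toReal + 1) * ν E := by
        gcongr
        exact ENNReal.le_ofReal_iff_toReal_le hCa (by positivity) |>.2 (by linarith)

end Interpolation

end HomothecyBasis

theorem statement1_general (n : ℕ) (𝔅 : Set (Set (EuclideanSpace ℝ (Fin n))))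
    (hB : ∀ B ∈ 𝔅, IsConvexBasisSet B) (hhom : HomothecyInvariant 𝔅)
    (μ ν : Measure (EuclideanSpace ℝ (Fin n))) [IsLocallyFiniteMeasure μ]
    (hμ : μ ≠ 0) (hdbl : ∃ Δ : ℝ, DoublingWrt μ 𝔅 Δ) :
    (∃ γ ∈ Set.Ioo (0 : ℝ) 1, ∃ c : ℝ, 0 < c ∧ TauberianCond μ ν 𝔅 γ c)
    ↔ (∃ p₀ : ℝ, 1 < p₀ ∧ ∀ p : ℝ, p₀ < p → BoundedOnLp μ ν 𝔅 p) := by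
  obtain ⟨Δ, hΔ⟩ := hdbl
  have h𝔅 : IsConvexHomothecyBasis 𝔅 := ⟨hB, hhom⟩
  constructor
  · rintro ⟨γ, hγ, c, -, hT⟩
    exact hT.exists_boundedOnLp h𝔅 hΔ hμ hγ.2
  · rintro ⟨p₀, hp₀, hbdd⟩
    have hhalf : (1 / 2 : ℝ) ∈ Ioo 0 1 := by norm_num
    exact ⟨1 / 2, hhalf, (hbdd (p₀ + 1) (by linarith)).exists_tauberianCond
      (fun B hB => h𝔅.isOpen hB) (by linarith) hhalf.1⟩

/-- For a homothecy invariant basis `𝔅` of nonempty bounded open convex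
sets and locally finite Borel measures `μ, ν` with `μ` nonzero and doubling w.r.t. `𝔅`:
the Tauberian condition at some fixed level `γ ∈ (0,1)` for `M_{𝔅,μ}` w.r.t. `ν` holds
iff there is `p₀ > 1` such that `M_{𝔅,μ}` is bounded on `L^p(ν)` for all `p > p₀`. -/
theorem statement1 (n : ℕ) (𝔅 : Set (Set (EuclideanSpace ℝ (Fin n))))
    (hB : ∀ B ∈ 𝔅, IsConvexBasisSet B) (hhom : HomothecyInvariant 𝔅)
    (μ ν : Measure (EuclideanSpace ℝ (Fin n)))
    (hlocμ : IsLocallyFiniteMeasure μ) (hlocν : IsLocallyFiniteMeasure ν)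
    (hμ : μ ≠ 0) (hdbl : ∃ Δ : ℝ, 1 < Δ ∧ DoublingWrt μ 𝔅 Δ) :
    (∃ γ ∈ Set.Ioo (0 : ℝ) 1, ∃ c : ℝ, 0 < c ∧ TauberianCond μ ν 𝔅 γ c)
    ↔ (∃ p₀ : ℝ, 1 < p₀ ∧ ∀ p : ℝ, p₀ < p → BoundedOnLp μ ν 𝔅 p) :=
  statement1_general n 𝔅 hB hhom μ ν hμ (hdbl.imp fun _ h => h.2)
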